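/- Let 1 ≤ c < r. (a) If N is an indecomposable representation of Γ_r with dimension vector (1, c), then every proper subrepresentation W of N satisfies W₁ = 0; in particular W is a direct sum of copies of the simple projective representation with dimension vector (0,1). (b) If M is an indecomposable representation of Γ_r with dimension vector (c, 1), then every proper quotient M/W of M satisfies (M/W)₂ = 0; in particular M/W is a direct sum of copies of the simple injective representation with dimension vector (1,0). -/

import Mathlib

open Module LinearMap

universe u

/-- A finite-dimensional representation of the `r`-Kronecker quiver `Γ_r` over `k`:
two finite-dimensional `k`-vector spaces `M₁`, `M₂` and `r` linear maps `M₁ → M₂`. -/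
structure KRep (k : Type u) [Field k] (r : ℕ) : Type (u + 1) where
  V1 : Type u
  V2 : Type u
  [addV1 : AddCommGroup V1]
  [addV2 : AddCommGroup V2]
  [modV1 : Module k V1]
  [modV2 : Module k V2]
  [finV1 : FiniteDimensional k V1]
  [finV2 : FiniteDimensional k V2]
  f : Fin r → V1 →ₗ[k] V2

attribute [instance] KRep.addV1 KRep.addV2 KRep.modV1 KRep.modV2 KRep.finV1 KRep.finV2

variable {k : Type u} [Field k] {r : ℕ}

/-- For `α ∈ k^r`, the operator `x^M_α = ∑ i, αᵢ • M(γᵢ) : M₁ → M₂`. -/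
def KRep.x (M : KRep k r) (α : Fin r → k) : M.V1 →ₗ[k] M.V2 :=
  ∑ i, α i • M.f i

/-- The space `Hom(M, N)` of morphisms of representations, as a `k`-submodule of the
pairs of linear maps `(f₁ : M₁ → N₁, f₂ : M₂ → N₂)`; membership is the condition
`f₂ ∘ M(γᵢ) = N(γᵢ) ∘ f₁` for all `i`. -/
def KHom (M N : KRep k r) : Submodule k ((M.V1 →ₗ[k] N.V1) × (M.V2 →ₗ[k] N.V2)) where
  carrier := {p | ∀ i, p.2 ∘ₗ M.f i = N.f i ∘ₗ p.1}
  add_mem' := by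
    intro a b ha hb i
    simp only [Prod.snd_add, Prod.fst_add, LinearMap.add_comp, LinearMap.comp_add, ha i, hb i]
  zero_mem' := by intro i; simp
  smul_mem' := by
    intro c a ha i
    simp only [Prod.smul_snd, Prod.smul_fst, LinearMap.smul_comp, LinearMap.comp_smul, ha i]

/-- The representation `X_U` attached to a subspace `U ⊆ k^r`:
`(X_U)₁ = k`, `(X_U)₂ = k^r/U`, and `X_U(γᵢ)(c) = c · (eᵢ + U)`. -/
def XU (U : Submodule k (Fin r → k)) : KRep k r where
  V1 := k
  V2 := (Fin r → k) ⧸ U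
  f := fun i => LinearMap.toSpanSingleton k _ (Submodule.Quotient.mk (Pi.single i 1))

/-- The `M₁`-part of the socle: `{m ∈ M₁ : x^M_u(m) = 0 for all u ∈ U}`. -/
def KRep.socKer (M : KRep k r) (U : Submodule k (Fin r → k)) : Submodule k M.V1 :=
  ⨅ u ∈ U, LinearMap.ker (M.x u)

/-- `Soc_U(M) = {m ∈ M₁ : x^M_u(m) = 0 ∀ u ∈ U} ⊕ M₂`, as a subspace of `M₁ ⊕ M₂`. -/
def KRep.soc (M : KRep k r) (U : Submodule k (Fin r → k)) : Submodule k (M.V1 × M.V2) :=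
  (M.socKer U).prod ⊤

/-- `Rad_U(M) = ∑_{u ∈ U} x^M_u(M₁) ⊆ M₂`. -/
def KRep.rad (M : KRep k r) (U : Submodule k (Fin r → k)) : Submodule k M.V2 :=
  ⨆ u ∈ U, LinearMap.range (M.x u)

/-- Direct sum of two representations. -/
def KRep.sum (M N : KRep k r) : KRep k r where
  V1 := M.V1 × N.V1
  V2 := M.V2 × N.V2
  f := fun i => (M.f i).prodMap (N.f i)

/-- Isomorphism of representations. -/
def KIso (M N : KRep k r) : Prop :=
  ∃ (e1 : M.V1 ≃ₗ[k] N.V1) (e2 : M.V2 ≃ₗ[k] N.V2),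
    ∀ i, (e2 : M.V2 →ₗ[k] N.V2) ∘ₗ M.f i = N.f i ∘ₗ (e1 : M.V1 →ₗ[k] N.V1)

/-- A representation is nonzero if its dimension vector is not `(0,0)`. -/
def KRep.Nonzero (M : KRep k r) : Prop :=
  finrank k M.V1 ≠ 0 ∨ finrank k M.V2 ≠ 0

/-- A representation is indecomposable if it is nonzero and not isomorphic to a direct
sum of two nonzero representations. -/
def KRep.Indecomposable (M : KRep k r) : Prop :=
  M.Nonzero ∧ ∀ A B : KRep k r, A.Nonzero → B.Nonzero → ¬ KIso M (A.sum B)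

/-- A representation is simple if its dimension vector is `(1,0)` or `(0,1)`. -/
def KRep.IsSimple (M : KRep k r) : Prop :=
  (finrank k M.V1 = 1 ∧ finrank k M.V2 = 0) ∨ (finrank k M.V1 = 0 ∧ finrank k M.V2 = 1)

/-- `M` has constant `d`-socle rank: `dim_k Soc_U(M)` is independent of `U ∈ Gr_{d,r}`. -/
def KRep.ConstSocRank (d : ℕ) (M : KRep k r) : Prop :=
  ∃ c : ℕ, ∀ U : Submodule k (Fin r → k), finrank k U = d → finrank k (M.soc U) = c

/-- `M` has the equal `d`-socle property: `Soc_U(M)` is independent of `U ∈ Gr_{d,r}`. -/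
def KRep.ESP (d : ℕ) (M : KRep k r) : Prop :=
  ∀ U V : Submodule k (Fin r → k), finrank k U = d → finrank k V = d → M.soc U = M.soc V

/-- `M` has constant `d`-radical rank: `dim_k Rad_U(M)` is independent of `U ∈ Gr_{d,r}`. -/
def KRep.ConstRadRank (d : ℕ) (M : KRep k r) : Prop :=
  ∃ c : ℕ, ∀ U : Submodule k (Fin r → k), finrank k U = d → finrank k (M.rad U) = c

/-- `M` has the equal `d`-radical property: `Rad_U(M)` is independent of `U ∈ Gr_{d,r}`. -/
def KRep.ERP (d : ℕ) (M : KRep k r) : Prop :=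
  ∀ U V : Submodule k (Fin r → k), finrank k U = d → finrank k V = d → M.rad U = M.rad V

/-- The subrepresentation of `M` given by compatible subspaces `W₁ ⊆ M₁`, `W₂ ⊆ M₂`,
viewed as a representation. -/
def KRep.subRep (M : KRep k r) (W1 : Submodule k M.V1) (W2 : Submodule k M.V2)
    (h : ∀ i, W1 ≤ W2.comap (M.f i)) : KRep k r where
  V1 := W1
  V2 := W2
  f := fun i => (M.f i).restrict (fun _ hx => h i hx)

/-- The quotient representation `M/W` for compatible subspaces `W₁ ⊆ M₁`, `W₂ ⊆ M₂`. -/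
def KRep.quotRep (M : KRep k r) (W1 : Submodule k M.V1) (W2 : Submodule k M.V2)
    (h : ∀ i, W1 ≤ W2.comap (M.f i)) : KRep k r where
  V1 := M.V1 ⧸ W1
  V2 := M.V2 ⧸ W2
  f := fun i => Submodule.mapQ W1 W2 (M.f i) (h i)

/-!
An indecomposable representation admits no compatible pair of complementary decompositions
`M₁ = P₁ ⊕ Q₁`, `M₂ = P₂ ⊕ Q₂` other than the trivial ones. If the images of the structure maps
all lie in `W₂`, any complement `C` of `W₂` splits `M` as `(M₁, W₂) ⊕ (0, C)`, so `M₁ ≠ 0` forces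
`W₂ = M₂`; if their kernels all contain `W₁`, a complement `C` of `W₁` splits `M` as
`(W₁, 0) ⊕ (C, M₂)`, so `M₂ ≠ 0` forces `W₁ = 0`. A subspace of a one-dimensional space is zero or
everything, which brings (a) and (b) into these two cases.
-/

theorem prodEquivOfIsCompl_symm_comp_eq_prodMap_restrict {R V V' : Type*} [Ring R]
    [AddCommGroup V] [Module R V] [AddCommGroup V'] [Module R V'] {P Q : Submodule R V}
    {P' Q' : Submodule R V'} (h : IsCompl P Q) (h' : IsCompl P' Q') {f : V →ₗ[R] V'}
    (hP : P ≤ P'.comap f) (hQ : Q ≤ Q'.comap f) :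
    (P'.prodEquivOfIsCompl Q' h').symm.toLinearMap ∘ₗ f =
      (f.restrict hP).prodMap (f.restrict hQ) ∘ₗ (P.prodEquivOfIsCompl Q h).symm.toLinearMap := by
  rw [LinearEquiv.toLinearMap_symm_comp_eq, ← LinearMap.comp_assoc,
    LinearEquiv.eq_comp_toLinearMap_symm]
  ext <;> simp

namespace KRep

variable {M : KRep k r} {P1 Q1 W1 : Submodule k M.V1} {P2 Q2 W2 : Submodule k M.V2}

theorem nonzero_subRep_iff (hP : ∀ i, P1 ≤ P2.comap (M.f i)) :
    (M.subRep P1 P2 hP).Nonzero ↔ P1 ≠ ⊥ ∨ P2 ≠ ⊥ :=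
  or_congr Submodule.finrank_eq_zero.not Submodule.finrank_eq_zero.not

theorem kIso_sum_subRep_of_isCompl (h1 : IsCompl P1 Q1) (h2 : IsCompl P2 Q2)
    (hP : ∀ i, P1 ≤ P2.comap (M.f i)) (hQ : ∀ i, Q1 ≤ Q2.comap (M.f i)) :
    KIso M ((M.subRep P1 P2 hP).sum (M.subRep Q1 Q2 hQ)) :=
  ⟨_, _, fun i => prodEquivOfIsCompl_symm_comp_eq_prodMap_restrict h1 h2 (hP i) (hQ i)⟩

namespace Indecomposable

theorem eq_bot_or_eq_bot_of_isCompl (hM : M.Indecomposable) (h1 : IsCompl P1 Q1)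
    (h2 : IsCompl P2 Q2) (hP : ∀ i, P1 ≤ P2.comap (M.f i))
    (hQ : ∀ i, Q1 ≤ Q2.comap (M.f i)) :
    (P1 = ⊥ ∧ P2 = ⊥) ∨ (Q1 = ⊥ ∧ Q2 = ⊥) := by
  by_contra h
  rw [not_or, not_and_or, not_and_or] at h
  exact hM.2 _ _ ((nonzero_subRep_iff hP).2 h.1) ((nonzero_subRep_iff hQ).2 h.2)
    (kIso_sum_subRep_of_isCompl h1 h2 hP hQ)

theorem eq_top_of_range_le [Nontrivial M.V1] (hM : M.Indecomposable)
    (h : ∀ i, range (M.f i) ≤ W2) : W2 = ⊤ := by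
  obtain ⟨C, hC⟩ := W2.exists_isCompl
  have hW : ∀ i, ⊤ ≤ W2.comap (M.f i) := fun i => (range_le_iff_comap.1 (h i)).ge
  obtain ⟨htop, -⟩ | ⟨-, rfl⟩ :=
    hM.eq_bot_or_eq_bot_of_isCompl isCompl_top_bot hC hW fun _ => bot_le
  · exact absurd htop top_ne_bot
  · exact eq_top_of_isCompl_bot hC

theorem eq_bot_of_le_ker [Nontrivial M.V2] (hM : M.Indecomposable)
    (h : ∀ i, W1 ≤ ker (M.f i)) : W1 = ⊥ := by
  obtain ⟨C, hC⟩ := W1.exists_isCompl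
  obtain ⟨hW1, -⟩ | ⟨-, htop⟩ :=
    hM.eq_bot_or_eq_bot_of_isCompl hC isCompl_bot_top h fun _ => le_top
  · exact hW1
  · exact absurd htop top_ne_bot

theorem eq_bot_of_finrank_V1_eq_one (hM : M.Indecomposable) (h1 : finrank k M.V1 = 1)
    (hW : ∀ i, W1 ≤ W2.comap (M.f i)) (hne : ¬ (W1 = ⊤ ∧ W2 = ⊤)) : W1 = ⊥ := by
  have := isSimpleModule_iff_finrank_eq_one.2 h1
  have := IsSimpleModule.nontrivial k M.V1
  refine (eq_bot_or_eq_top W1).resolve_right ?_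
  rintro rfl
  exact hne ⟨rfl, hM.eq_top_of_range_le fun i => range_le_iff_comap.2 (top_le_iff.1 (hW i))⟩

theorem eq_top_of_finrank_V2_eq_one (hM : M.Indecomposable) (h2 : finrank k M.V2 = 1)
    (hW : ∀ i, W1 ≤ W2.comap (M.f i)) (hne : ¬ (W1 = ⊥ ∧ W2 = ⊥)) : W2 = ⊤ := by
  have := isSimpleModule_iff_finrank_eq_one.2 h2
  have := IsSimpleModule.nontrivial k M.V2
  refine (eq_bot_or_eq_top W2).resolve_left ?_
  rintro rfl
  exact hne ⟨hM.eq_bot_of_le_ker hW, rfl⟩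

end Indecomposable

theorem finrank_quotRep_V2_eq_zero_iff (hW : ∀ i, W1 ≤ W2.comap (M.f i)) :
    finrank k (M.quotRep W1 W2 hW).V2 = 0 ↔ W2 = ⊤ :=
  finrank_zero_iff.trans Submodule.Quotient.subsingleton_iff

end KRep

theorem sub_of_one_c_and_quot_of_c_one_general :
    (∀ (N : KRep k r), N.Indecomposable → finrank k N.V1 = 1 →
      ∀ (W1 : Submodule k N.V1) (W2 : Submodule k N.V2),
        (∀ i, W1 ≤ W2.comap (N.f i)) → ¬ (W1 = ⊤ ∧ W2 = ⊤) → W1 = ⊥) ∧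
    (∀ (M : KRep k r), M.Indecomposable → finrank k M.V2 = 1 →
      ∀ (W1 : Submodule k M.V1) (W2 : Submodule k M.V2)
        (h : ∀ i, W1 ≤ W2.comap (M.f i)), ¬ (W1 = ⊥ ∧ W2 = ⊥) →
        finrank k ((M.quotRep W1 W2 h).V2) = 0) :=
  ⟨fun _ hN h1 _ _ hW hne => hN.eq_bot_of_finrank_V1_eq_one h1 hW hne,
    fun _ hM h2 _ _ hW hne =>
      (KRep.finrank_quotRep_V2_eq_zero_iff hW).2 (hM.eq_top_of_finrank_V2_eq_one h2 hW hne)⟩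

/-- Let `1 ≤ c < r`. (a) If `N` is an indecomposable representation of
`Γ_r` with dimension vector `(1, c)`, then every proper subrepresentation `W` of `N`
satisfies `W₁ = 0`. (b) If `M` is indecomposable with dimension vector `(c, 1)`, then
every proper quotient `M/W` of `M` satisfies `(M/W)₂ = 0`. -/
theorem sub_of_one_c_and_quot_of_c_one (c : ℕ) (hc : 1 ≤ c) (hcr : c < r) :
    (∀ (N : KRep k r), N.Indecomposable →
      finrank k N.V1 = 1 → finrank k N.V2 = c →
      ∀ (W1 : Submodule k N.V1) (W2 : Submodule k N.V2),
        (∀ i, W1 ≤ W2.comap (N.f i)) → ¬ (W1 = ⊤ ∧ W2 = ⊤) → W1 = ⊥) ∧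
    (∀ (M : KRep k r), M.Indecomposable →
      finrank k M.V1 = c → finrank k M.V2 = 1 →
      ∀ (W1 : Submodule k M.V1) (W2 : Submodule k M.V2)
        (h : ∀ i, W1 ≤ W2.comap (M.f i)), ¬ (W1 = ⊥ ∧ W2 = ⊥) →
        finrank k ((M.quotRep W1 W2 h).V2) = 0) :=
  ⟨fun N hN h1 _ => sub_of_one_c_and_quot_of_c_one_general.1 N hN h1,
    fun M hM _ h2 => sub_of_one_c_and_quot_of_c_one_general.2 M hM h2⟩
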